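/- arXiv:2011.14609 — 2 statements merged into one kernel-verified Lean document; each statement's English description precedes it below -/
import Mathlib

section
/- Let m and n be positive integers with n ≥ 4 even, let 0 ≤ ℓ ≤ n−1 be an integer of the same parity as m, and let G = ⟨t, x, y | t² = 1, x^{n/2} = 1, y^m = x^{(ℓ+m)/2}, txt = x⁻¹, tyt = y⁻¹, xy = yx⟩. Then Aut(G; {t, tx, ty}) is isomorphic to the symmetric group S₃ if and only if n = 2ℓ and either ℓ = m or ℓ = 3m. -/
namespace HTGPaper

/-- The honeycomb toroidal graph `HTG(m,n,ℓ)`. -/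
def HTG (m n ℓ : ℕ) : SimpleGraph (ZMod m × ZMod n) :=
  SimpleGraph.fromRel (fun v w =>
    (v.1 = w.1 ∧ (w.2 = v.2 + 1 ∨ w.2 = v.2 - 1)) ∨
    (v.1.val ≠ m - 1 ∧ w.1 = v.1 + 1 ∧ w.2 = v.2 ∧ v.1.val % 2 ≠ v.2.val % 2) ∨
    (v.1.val = m - 1 ∧ w.1 = 0 ∧ w.2 = v.2 + (ℓ : ZMod n) ∧ v.2.val % 2 = m % 2))

/-- Generators of the generalized dihedral group `G`. -/
inductive Gen | t | x | y

/-- Relators of the presentation of `G`. -/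
def rels (m n ℓ : ℕ) : Set (FreeGroup Gen) :=
  {FreeGroup.of Gen.t ^ 2,
   FreeGroup.of Gen.x ^ (n / 2),
   FreeGroup.of Gen.y ^ m * (FreeGroup.of Gen.x ^ ((ℓ + m) / 2))⁻¹,
   FreeGroup.of Gen.t * FreeGroup.of Gen.x * (FreeGroup.of Gen.t)⁻¹ * FreeGroup.of Gen.x,
   FreeGroup.of Gen.t * FreeGroup.of Gen.y * (FreeGroup.of Gen.t)⁻¹ * FreeGroup.of Gen.y,
   FreeGroup.of Gen.x * FreeGroup.of Gen.y * (FreeGroup.of Gen.x)⁻¹ * (FreeGroup.of Gen.y)⁻¹}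

/-- The group `G = ⟨t,x,y | t², x^{n/2}, y^m x^{-(ℓ+m)/2}, txt⁻¹x, tyt⁻¹y, [x,y]⟩`. -/
abbrev G (m n ℓ : ℕ) : Type := PresentedGroup (rels m n ℓ)

def gent (m n ℓ : ℕ) : G m n ℓ := PresentedGroup.of Gen.t
def genx (m n ℓ : ℕ) : G m n ℓ := PresentedGroup.of Gen.x
def geny (m n ℓ : ℕ) : G m n ℓ := PresentedGroup.of Gen.y

/-- The connection set `{t, tx, ty}`. -/
def S (m n ℓ : ℕ) : Set (G m n ℓ) :=
  {gent m n ℓ, gent m n ℓ * genx m n ℓ, gent m n ℓ * geny m n ℓ}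

/-- The Cayley graph of a group with respect to a subset. -/
def cayley (H : Type*) [Group H] (T : Set H) : SimpleGraph H :=
  SimpleGraph.fromRel (fun g h => ∃ s ∈ T, h = g * s)

/-- The Cayley graph of an additive group with respect to a subset. -/
def addCayley (H : Type*) [AddGroup H] (T : Set H) : SimpleGraph H :=
  SimpleGraph.fromRel (fun g h => ∃ s ∈ T, h = g + s)

/-- `Cay(H;T)` is a normal Cayley graph of `H` if the left regular representation `H_L`
is a normal subgroup of the automorphism group, i.e. every conjugate of a left
translation by a graph automorphism is again a left translation. -/
def IsNormalCayley (H : Type*) [Group H] (T : Set H) : Prop :=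
  ∀ (f : cayley H T ≃g cayley H T) (a : H), ∃ b : H,
    ∀ g : H, f (a * f.symm g) = b * g

/-- An `s`-arc of a graph: `s+1` vertices, consecutive ones adjacent, and any three
consecutive vertices pairwise distinct. -/
def IsSArc {V : Type*} (Γ : SimpleGraph V) (s : ℕ) (p : Fin (s + 1) → V) : Prop :=
  (∀ i : Fin s, Γ.Adj (p i.castSucc) (p i.succ)) ∧
  ∀ i j : Fin (s + 1), (i : ℕ) + 2 = (j : ℕ) → p i ≠ p j

/-- A graph is `s`-arc-transitive if its automorphism group is transitive on `s`-arcs. -/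
def IsSArcTransitive {V : Type*} (Γ : SimpleGraph V) (s : ℕ) : Prop :=
  ∀ p q : Fin (s + 1) → V, IsSArc Γ s p → IsSArc Γ s q →
    ∃ f : Γ ≃g Γ, ∀ i, f (p i) = q i

/-- A graph is `s`-arc-regular if its automorphism group is regular on `s`-arcs. -/
def IsSArcRegular {V : Type*} (Γ : SimpleGraph V) (s : ℕ) : Prop :=
  ∀ p q : Fin (s + 1) → V, IsSArc Γ s p → IsSArc Γ s q →
    ∃! f : Γ ≃g Γ, ∀ i, f (p i) = q i

/-- A graph is arc-transitive if it is `1`-arc-transitive. -/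
def IsArcTransitive {V : Type*} (Γ : SimpleGraph V) : Prop :=
  IsSArcTransitive Γ 1

/-- The generalized prism `GPr(k)`. -/
def GPr (k : ℕ) : SimpleGraph (ZMod 2 × ZMod (2 * k)) :=
  SimpleGraph.fromRel (fun v w =>
    (v.1 = w.1 ∧ (w.2 = v.2 + 1 ∨ w.2 = v.2 - 1)) ∨
    (Even v.2.val ∧ w.1 = v.1 + 1 ∧ w.2 = v.2 + 1))

/-- The cubic graph on `k` vertices given by LCF-type data `f`. -/
def lcfGraph (k : ℕ) (f : ℕ → ℤ) : SimpleGraph (ZMod k) :=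
  SimpleGraph.fromRel (fun v w => w = v + 1 ∨ w = v + (f v.val : ZMod k))

/-- The cube graph `Q₃`, LCF notation `[3,-3]⁴`. -/
def cubeGraph : SimpleGraph (ZMod 8) :=
  lcfGraph 8 (fun i => if i % 2 = 0 then 3 else -3)

/-- The Heawood graph, LCF notation `[5,-5]⁷`. -/
def heawood : SimpleGraph (ZMod 14) :=
  lcfGraph 14 (fun i => if i % 2 = 0 then 5 else -5)

/-- The Möbius–Kantor graph, LCF notation `[5,-5]⁸`. -/
def mobiusKantor : SimpleGraph (ZMod 16) :=
  lcfGraph 16 (fun i => if i % 2 = 0 then 5 else -5)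

/-- The Pappus graph, LCF notation `[5,7,-7,7,-7,-5]³`. -/
def pappus : SimpleGraph (ZMod 18) :=
  lcfGraph 18 (fun i =>
    match i % 6 with
    | 0 => 5 | 1 => 7 | 2 => -7 | 3 => 7 | 4 => -7 | _ => -5)

/-- The red edges of `HTG(m,n,ℓ) = Cay(G;{t,tx,ty})`. -/
def Red (m n ℓ : ℕ) : Set (Sym2 (G m n ℓ)) :=
  {e | ∃ g : G m n ℓ, e = s(g, g * gent m n ℓ)}

/-- The blue edges. -/
def Blue (m n ℓ : ℕ) : Set (Sym2 (G m n ℓ)) :=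
  {e | ∃ g : G m n ℓ, e = s(g, g * (gent m n ℓ * genx m n ℓ))}

/-- The green edges. -/
def Green (m n ℓ : ℕ) : Set (Sym2 (G m n ℓ)) :=
  {e | ∃ g : G m n ℓ, e = s(g, g * (gent m n ℓ * geny m n ℓ))}

/-- The three color classes. -/
def colorClasses (m n ℓ : ℕ) : Set (Set (Sym2 (G m n ℓ))) :=
  {Red m n ℓ, Blue m n ℓ, Green m n ℓ}

/-- An automorphism of `Cay(G;{t,tx,ty})` is color permuting if it preserves the
partition of the edges into the three color classes. -/
def IsColorPermuting {m n ℓ : ℕ}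
    (f : cayley (G m n ℓ) (S m n ℓ) ≃g cayley (G m n ℓ) (S m n ℓ)) : Prop :=
  ∀ C ∈ colorClasses m n ℓ, Sym2.map ⇑f '' C ∈ colorClasses m n ℓ

/-- The group `Aut(H;T)` of automorphisms of `H` fixing `T` setwise. -/
def autFixing (H : Type*) [Group H] (T : Set H) : Subgroup (MulAut H) where
  carrier := {φ | ⇑φ '' T = T}
  one_mem' := by
    show ⇑(1 : MulAut H) '' T = T
    simp
  mul_mem' := by
    intro a b ha hb
    show ⇑(a * b) '' T = T
    have h : ⇑(a * b) = ⇑a ∘ ⇑b := rfl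
    rw [h, Set.image_comp]
    rw [show ⇑b '' T = T from hb, show ⇑a '' T = T from ha]
  inv_mem' := by
    intro a ha
    show ⇑a⁻¹ '' T = T
    conv_lhs => rw [← show ⇑a '' T = T from ha]
    rw [← Set.image_comp]
    have h : ⇑a⁻¹ ∘ ⇑a = id := by
      funext g
      simp
    rw [h, Set.image_id]


/-! ### Auxiliary material for the proof -/

lemma rel_t (m n ℓ : ℕ) : gent m n ℓ * gent m n ℓ = 1 := by
  have h : PresentedGroup.mk (rels m n ℓ) (FreeGroup.of Gen.t ^ 2) = 1 :=
    PresentedGroup.one_of_mem (by simp [rels])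
  rw [map_pow, pow_two] at h
  exact h

lemma rel_x (m n ℓ : ℕ) : genx m n ℓ ^ (n / 2) = 1 := by
  have h : PresentedGroup.mk (rels m n ℓ) (FreeGroup.of Gen.x ^ (n / 2)) = 1 :=
    PresentedGroup.one_of_mem (by simp [rels])
  rw [map_pow] at h
  exact h

lemma rel_y (m n ℓ : ℕ) : geny m n ℓ ^ m = genx m n ℓ ^ ((ℓ + m) / 2) := by
  have h : PresentedGroup.mk (rels m n ℓ)
      (FreeGroup.of Gen.y ^ m * (FreeGroup.of Gen.x ^ ((ℓ + m) / 2))⁻¹) = 1 :=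
    PresentedGroup.one_of_mem (by simp [rels])
  rw [map_mul, map_inv, map_pow, map_pow, mul_inv_eq_one] at h
  exact h

lemma inv_t (m n ℓ : ℕ) : (gent m n ℓ)⁻¹ = gent m n ℓ :=
  inv_eq_of_mul_eq_one_left (rel_t m n ℓ)

lemma rel_tx (m n ℓ : ℕ) :
    gent m n ℓ * genx m n ℓ = (genx m n ℓ)⁻¹ * gent m n ℓ := by
  have h : PresentedGroup.mk (rels m n ℓ) (FreeGroup.of Gen.t * FreeGroup.of Gen.x *
      (FreeGroup.of Gen.t)⁻¹ * FreeGroup.of Gen.x) = 1 :=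
    PresentedGroup.one_of_mem (by simp [rels])
  simp only [map_mul, map_inv] at h
  have h' : gent m n ℓ * genx m n ℓ * (gent m n ℓ)⁻¹ * genx m n ℓ = 1 := h
  rw [mul_eq_one_iff_eq_inv, mul_inv_eq_iff_eq_mul] at h'
  exact h'

lemma rel_ty (m n ℓ : ℕ) :
    gent m n ℓ * geny m n ℓ = (geny m n ℓ)⁻¹ * gent m n ℓ := by
  have h : PresentedGroup.mk (rels m n ℓ) (FreeGroup.of Gen.t * FreeGroup.of Gen.y *
      (FreeGroup.of Gen.t)⁻¹ * FreeGroup.of Gen.y) = 1 :=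
    PresentedGroup.one_of_mem (by simp [rels])
  simp only [map_mul, map_inv] at h
  have h' : gent m n ℓ * geny m n ℓ * (gent m n ℓ)⁻¹ * geny m n ℓ = 1 := h
  rw [mul_eq_one_iff_eq_inv, mul_inv_eq_iff_eq_mul] at h'
  exact h'

lemma rel_xy (m n ℓ : ℕ) : Commute (genx m n ℓ) (geny m n ℓ) := by
  have h : PresentedGroup.mk (rels m n ℓ) (FreeGroup.of Gen.x * FreeGroup.of Gen.y *
      (FreeGroup.of Gen.x)⁻¹ * (FreeGroup.of Gen.y)⁻¹) = 1 :=
    PresentedGroup.one_of_mem (by simp [rels])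
  simp only [map_mul, map_inv] at h
  have h' : genx m n ℓ * geny m n ℓ * (genx m n ℓ)⁻¹ * (geny m n ℓ)⁻¹ = 1 := h
  rw [mul_inv_eq_one, mul_inv_eq_iff_eq_mul] at h'
  exact h'

/-- Homomorphisms out of `G`. -/
lemma exists_hom {H : Type*} [Group H] (m n ℓ : ℕ) (t x y : H) (ht : t * t = 1)
    (hx : x ^ (n / 2) = 1) (hy : y ^ m = x ^ ((ℓ + m) / 2))
    (htx : t * x = x⁻¹ * t) (hty : t * y = y⁻¹ * t) (hxy : x * y = y * x) :
    ∃ f : G m n ℓ →* H, f (gent m n ℓ) = t ∧ f (genx m n ℓ) = x ∧ f (geny m n ℓ) = y := by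
  let g : Gen → H := fun s => match s with
    | Gen.t => t
    | Gen.x => x
    | Gen.y => y
  have hg : ∀ r ∈ rels m n ℓ, FreeGroup.lift g r = 1 := by
    intro r hr
    simp only [rels, Set.mem_insert_iff, Set.mem_singleton_iff] at hr
    rcases hr with rfl | rfl | rfl | rfl | rfl | rfl
    · simp [g, pow_two, ht]
    · simp [g, hx]
    · simp [g, hy]
    · simp [g, htx]
    · simp [g, hty]
    · simp [g, hxy]
  exact ⟨PresentedGroup.toGroup hg, PresentedGroup.toGroup.of hg, PresentedGroup.toGroup.of hg,
    PresentedGroup.toGroup.of hg⟩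

lemma hom_ext {H : Type*} [Group H] {m n ℓ : ℕ} {f g : G m n ℓ →* H}
    (ht : f (gent m n ℓ) = g (gent m n ℓ)) (hx : f (genx m n ℓ) = g (genx m n ℓ))
    (hy : f (geny m n ℓ) = g (geny m n ℓ)) : f = g := by
  apply PresentedGroup.ext
  intro s
  cases s
  · exact ht
  · exact hx
  · exact hy

/-- The relation lattice of `⟨x, y⟩`. -/
def lat (m n ℓ : ℕ) : AddSubgroup (ℤ × ℤ) :=
  AddSubgroup.closure {(((n / 2 : ℕ) : ℤ), 0), (-(((ℓ + m) / 2 : ℕ) : ℤ), (m : ℤ))}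

/-- A word `x ^ i * y ^ j` is trivial only if `(i, j)` is in the relation lattice. -/
lemma word (m n ℓ : ℕ) (i j : ℤ) (h : genx m n ℓ ^ i * geny m n ℓ ^ j = 1) :
    ∃ p q : ℤ, i = p * ((n / 2 : ℕ) : ℤ) - q * (((ℓ + m) / 2 : ℕ) : ℤ) ∧ j = q * m := by
  let π : ℤ × ℤ →+ (ℤ × ℤ) ⧸ lat m n ℓ := QuotientAddGroup.mk' (lat m n ℓ)
  let T : Multiplicative ((ℤ × ℤ) ⧸ lat m n ℓ) →* Equiv.Perm ((ℤ × ℤ) ⧸ lat m n ℓ) :=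
    { toFun := fun v => Equiv.addLeft v.toAdd
      map_one' := by ext w; simp
      map_mul' := by intro v w; ext z; simp }
  have key1 : π (((n / 2 : ℕ) : ℤ), 0) = 0 :=
    (QuotientAddGroup.eq_zero_iff _).2 (AddSubgroup.subset_closure (by simp))
  have key2 : π (-(((ℓ + m) / 2 : ℕ) : ℤ), (m : ℤ)) = 0 :=
    (QuotientAddGroup.eq_zero_iff _).2 (AddSubgroup.subset_closure (by simp))
  obtain ⟨f, ft, fx, fy⟩ := exists_hom m n ℓ (Equiv.neg ((ℤ × ℤ) ⧸ lat m n ℓ))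
    (T (Multiplicative.ofAdd (π (1, 0)))) (T (Multiplicative.ofAdd (π (0, 1))))
    (by ext w; simp)
    (by
      rw [← map_pow, ← ofAdd_nsmul, ← map_nsmul]
      have : (n / 2) • ((1, 0) : ℤ × ℤ) = (((n / 2 : ℕ) : ℤ), 0) := by ext <;> simp
      rw [this, key1]; simp)
    (by
      rw [← map_pow, ← ofAdd_nsmul, ← map_nsmul, ← map_pow, ← ofAdd_nsmul, ← map_nsmul]
      have : m • ((0, 1) : ℤ × ℤ) = (-(((ℓ + m) / 2 : ℕ) : ℤ), (m : ℤ)) +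
          ((ℓ + m) / 2) • ((1, 0) : ℤ × ℤ) := by ext <;> simp
      rw [this, map_add, key2, zero_add])
    (by rw [← map_inv]; ext w; simp [T, add_comm])
    (by rw [← map_inv]; ext w; simp [T, add_comm])
    (by rw [← map_mul T, ← map_mul T, mul_comm])
  have h2 := congrArg f h
  rw [map_mul, map_zpow, map_zpow, fx, fy, ← map_zpow T, ← map_zpow T, ← map_mul T, ← ofAdd_zsmul,
    ← ofAdd_zsmul, ← ofAdd_add, ← map_zsmul, ← map_zsmul, ← map_add, map_one] at h2
  have h3 := congrArg (fun e : Equiv.Perm ((ℤ × ℤ) ⧸ lat m n ℓ) => e 0) h2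
  have h4 : π (i • ((1, 0) : ℤ × ℤ) + j • ((0, 1) : ℤ × ℤ)) = 0 := by simpa [T] using h3
  have h5 : i • ((1, 0) : ℤ × ℤ) + j • ((0, 1) : ℤ × ℤ) = (i, j) := by ext <;> simp
  rw [h5] at h4
  have h6 : (i, j) ∈ lat m n ℓ := (QuotientAddGroup.eq_zero_iff _).1 h4
  obtain ⟨p, q, hpq⟩ := AddSubgroup.mem_closure_pair.1 h6
  refine ⟨p, q, ?_, ?_⟩
  · have := congrArg Prod.fst hpq
    simp only [Prod.fst_add, Prod.smul_fst, smul_eq_mul] at this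
    linarith
  · have := congrArg Prod.snd hpq
    simp at this
    linarith

/-- The action on the fixed set. -/
def act (H : Type*) [Group H] (T : Set H) : autFixing H T →* Equiv.Perm T :=
  MonoidHom.mk'
    (fun φ => Equiv.Perm.subtypePerm (φ.1.toEquiv) (fun x => by
      have h : ⇑φ.1 '' T = T := φ.2
      constructor
      · intro hx
        have hx' : φ.1 x ∈ ⇑φ.1 '' T := by rw [h]; exact hx
        obtain ⟨z, hz, hzx⟩ := hx'
        rwa [← φ.1.injective hzx]
      · intro hx
        have hx' : φ.1 x ∈ ⇑φ.1 '' T := ⟨x, hx, rfl⟩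
        rwa [h] at hx'))
    (fun φ ψ => by ext x; rfl)

lemma act_apply (H : Type*) [Group H] (T : Set H) (φ : autFixing H T) (x : T) :
    ((act H T φ x : T) : H) = φ.1 x := rfl

lemma t_mem (m n ℓ : ℕ) : gent m n ℓ ∈ S m n ℓ := by simp [S]
lemma tx_mem (m n ℓ : ℕ) : gent m n ℓ * genx m n ℓ ∈ S m n ℓ := by simp [S]
lemma ty_mem (m n ℓ : ℕ) : gent m n ℓ * geny m n ℓ ∈ S m n ℓ := by simp [S]

lemma act_injective (m n ℓ : ℕ) : Function.Injective (act (G m n ℓ) (S m n ℓ)) := by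
  intro φ ψ h
  have key : ∀ s ∈ S m n ℓ, φ.1 s = ψ.1 s := by
    intro s hs
    have := congrArg (fun e : Equiv.Perm (S m n ℓ) => ((e ⟨s, hs⟩ : S m n ℓ) : G m n ℓ)) h
    simpa [act_apply] using this
  have h1 := key _ (t_mem m n ℓ)
  have h2 := key _ (tx_mem m n ℓ)
  have h3 := key _ (ty_mem m n ℓ)
  rw [map_mul, map_mul, h1, mul_right_inj] at h2 h3
  have : (φ.1 : G m n ℓ →* G m n ℓ) = ψ.1 := hom_ext h1 h2 h3
  apply Subtype.ext
  ext g
  exact DFunLike.congr_fun this g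

lemma S_finite (m n ℓ : ℕ) : (S m n ℓ).Finite := by
  unfold S; exact Set.toFinite _

/-- An involutive assignment on the generators that satisfies the relations gives an
automorphism. -/
lemma exists_aut (m n ℓ : ℕ) (f : G m n ℓ →* G m n ℓ)
    (ht : f (f (gent m n ℓ)) = gent m n ℓ) (hx : f (f (genx m n ℓ)) = genx m n ℓ)
    (hy : f (f (geny m n ℓ)) = geny m n ℓ)
    (hS : ∀ s ∈ S m n ℓ, f s ∈ S m n ℓ) :
    ∃ φ : autFixing (G m n ℓ) (S m n ℓ), ∀ g, φ.1 g = f g := by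
  have hff : f.comp f = MonoidHom.id _ := hom_ext ht hx hy
  have hff' : ∀ g, f (f g) = g := fun g => DFunLike.congr_fun hff g
  refine ⟨⟨MonoidHom.toMulEquiv f f hff hff, ?_⟩, fun g => rfl⟩
  show ⇑f '' S m n ℓ = S m n ℓ
  apply Set.Subset.antisymm
  · rintro _ ⟨s, hs, rfl⟩
    exact hS s hs
  · intro s hs
    exact ⟨f s, hS s hs, hff' s⟩

lemma t_ne_tx (m n ℓ : ℕ) (h : gent m n ℓ = gent m n ℓ * genx m n ℓ) :
    genx m n ℓ = 1 := by simpa using h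

lemma grp_c3 {H : Type*} [Group H] {x y : H} {m a : ℕ} (rxy : Commute x y)
    (ry : y ^ m = x ^ a) (c3 : (x⁻¹ * y) ^ m = x⁻¹ ^ a) : x ^ (2 * a - m : ℤ) = 1 := by
  rw [rxy.inv_left.mul_pow, ry, inv_pow, inv_pow, inv_mul_eq_iff_eq_mul,
    eq_mul_inv_iff_mul_eq] at c3
  rw [zpow_sub, two_mul, zpow_add, zpow_natCast, zpow_natCast, c3, mul_inv_cancel]

lemma grp_r1 {H : Type*} [Group H] {x y : H} {m k a : ℕ} (rx : x ^ k = 1)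
    (ry : y ^ m = x ^ a) (hc : (k = m ∧ a = m) ∨ (k = 3 * m ∧ a = 2 * m)) : y ^ k = 1 := by
  rcases hc with ⟨h1, h2⟩ | ⟨h1, h2⟩
  · rw [h1, ry, h2, ← h1, rx]
  · rw [h1, mul_comm, pow_mul, ry, ← pow_mul, h2, show 2 * m * 3 = k * 2 by rw [h1]; ring,
      pow_mul, rx, one_pow]

lemma grp_r2 {H : Type*} [Group H] {x y : H} {m k a : ℕ} (rx : x ^ k = 1)
    (ry : y ^ m = x ^ a) (hc : (k = m ∧ a = m) ∨ (k = 3 * m ∧ a = 2 * m)) :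
    x ^ m = y ^ a := by
  rcases hc with ⟨h1, h2⟩ | ⟨h1, h2⟩
  · rw [h2, ry, h2]
  · rw [h2, mul_comm, pow_mul, ry, ← pow_mul, h2, show 2 * m * 2 = k + m by rw [h1]; ring,
      pow_add, rx, one_mul]

lemma grp_r3 {H : Type*} [Group H] {x y : H} {m k a : ℕ} (rxy : Commute x y)
    (rx : x ^ k = 1) (ry : y ^ m = x ^ a)
    (hc : (k = m ∧ a = m) ∨ (k = 3 * m ∧ a = 2 * m)) : (x⁻¹ * y) ^ m = x⁻¹ ^ a := by
  rw [rxy.inv_left.mul_pow, ry, inv_pow, inv_pow, inv_mul_eq_iff_eq_mul, eq_mul_inv_iff_mul_eq,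
    ← pow_add]
  rcases hc with ⟨h1, h2⟩ | ⟨h1, h2⟩
  · rw [h2, pow_add, ← h1, rx, one_mul]
  · rw [h2, show 2 * m + 2 * m = k + m by rw [h1]; ring, pow_add, rx, one_mul]

lemma forward (m k a ℓ : ℕ) (hm : 0 < m) (hk : 2 ≤ k) (ha : ℓ + m = 2 * a)
    (hl : ℓ ≤ 2 * k - 1)
    (e : autFixing (G m (2 * k) ℓ) (S m (2 * k) ℓ) ≃* Equiv.Perm (Fin 3)) :
    ℓ = k ∧ (ℓ = m ∨ ℓ = 3 * m) := by
  have hk2 : 2 * k / 2 = k := by omega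
  have ha2 : (ℓ + m) / 2 = a := by omega
  set t := gent m (2 * k) ℓ with ht
  set x := genx m (2 * k) ℓ with hx
  set y := geny m (2 * k) ℓ with hy
  haveI : Finite (S m (2 * k) ℓ) := S_finite _ _ _
  have hcard : Nat.card (autFixing (G m (2 * k) ℓ) (S m (2 * k) ℓ)) = 6 := by
    rw [Nat.card_congr e.toEquiv, Nat.card_perm]; simp [Nat.factorial]
  have hcS : Nat.card (S m (2 * k) ℓ) ≤ 3 := by
    have : (S m (2 * k) ℓ).ncard ≤ 3 := Set.ncard_insert_le _ _ |>.trans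
      (Nat.succ_le_succ ((Set.ncard_insert_le _ _).trans (by simp)))
    exact this
  have hP : Nat.card (Equiv.Perm (S m (2 * k) ℓ)) ≤ 6 := by
    rw [Nat.card_perm]
    exact (Nat.factorial_le hcS).trans (by simp [Nat.factorial])
  have hbij : Function.Bijective (act (G m (2 * k) ℓ) (S m (2 * k) ℓ)) := by
    rw [Nat.bijective_iff_injective_and_card]
    refine ⟨act_injective _ _ _, le_antisymm ?_ (hP.trans hcard.ge)⟩
    exact Nat.card_le_card_of_injective _ (act_injective _ _ _)
  have hcS3 : (S m (2 * k) ℓ).ncard = 3 := by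
    have h6 : Nat.card (Equiv.Perm (S m (2 * k) ℓ)) = 6 := by
      rw [← Nat.card_congr (Equiv.ofBijective _ hbij), hcard]
    rw [Nat.card_perm] at h6
    change Nat.card (S m (2 * k) ℓ) = 3
    interval_cases Nat.card (S m (2 * k) ℓ) <;> simp_all [Nat.factorial]
  have hne : t ≠ t * x ∧ t ≠ t * y ∧ t * x ≠ t * y := by
    refine ⟨fun h => ?_, fun h => ?_, fun h => ?_⟩
    all_goals
      have h2 : (S m (2 * k) ℓ).ncard ≤ 2 := by
        unfold S
        rw [← ht, ← hx, ← hy, ← h]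
        simp only [Set.insert_eq_of_mem, Set.mem_insert_iff, Set.mem_singleton_iff, true_or,
          or_true]
        exact (Set.ncard_insert_le _ _).trans (by simp)
      omega
  obtain ⟨ne1, ne2, ne3⟩ := hne
  have rt : t * t = 1 := rel_t _ _ _
  have rxy : Commute x y := rel_xy _ _ _
  have rtx : t * x = x⁻¹ * t := rel_tx _ _ _
  have rty : t * y = y⁻¹ * t := rel_ty _ _ _
  have rx : x ^ k = 1 := by have := rel_x m (2 * k) ℓ; rwa [hk2] at this
  have ry : y ^ m = x ^ a := by have := rel_y m (2 * k) ℓ; rwa [ha2] at this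
  let st : S m (2 * k) ℓ := ⟨t, t_mem _ _ _⟩
  let sx : S m (2 * k) ℓ := ⟨t * x, tx_mem _ _ _⟩
  let sy : S m (2 * k) ℓ := ⟨t * y, ty_mem _ _ _⟩
  have n1 : st ≠ sx := fun h => ne1 (congrArg Subtype.val h)
  have n2 : st ≠ sy := fun h => ne2 (congrArg Subtype.val h)
  have n3 : sx ≠ sy := fun h => ne3 (congrArg Subtype.val h)
  classical
  obtain ⟨α, hα⟩ := hbij.2 (Equiv.swap sx sy)
  obtain ⟨β, hβ⟩ := hbij.2 (Equiv.swap st sx)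
  have α1 : α.1 t = t := by
    rw [← act_apply _ _ α st, hα, Equiv.swap_apply_of_ne_of_ne n1 n2]
  have α2 : α.1 (t * x) = t * y := by
    rw [← act_apply _ _ α sx, hα, Equiv.swap_apply_left]
  have α3 : α.1 (t * y) = t * x := by
    rw [← act_apply _ _ α sy, hα, Equiv.swap_apply_right]
  have β1 : β.1 t = t * x := by
    rw [← act_apply _ _ β st, hβ, Equiv.swap_apply_left]
  have β2 : β.1 (t * x) = t := by
    rw [← act_apply _ _ β sx, hβ, Equiv.swap_apply_right]
  have β3 : β.1 (t * y) = t * y := by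
    rw [← act_apply _ _ β sy, hβ, Equiv.swap_apply_of_ne_of_ne n2.symm n3.symm]
  rw [map_mul, α1, mul_right_inj] at α2 α3
  rw [map_mul, β1, mul_assoc, mul_eq_left, mul_eq_one_iff_eq_inv'] at β2
  rw [map_mul, β1, mul_assoc, mul_right_inj, ← eq_inv_mul_iff_mul_eq] at β3
  -- consequences
  have c1 : y ^ k = 1 := by
    have := congrArg α.1 rx
    rwa [map_pow, α2, map_one] at this
  have c2 : x ^ m = y ^ a := by
    have := congrArg α.1 ry
    rwa [map_pow, map_pow, α2, α3] at this
  have c3 : (x⁻¹ * y) ^ m = x⁻¹ ^ a := by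
    have := congrArg β.1 ry
    rwa [map_pow, map_pow, β2, β3] at this
  have c3' : x ^ ((2 * a - m : ℤ)) * y ^ (0 : ℤ) = 1 := by
    rw [zpow_zero, mul_one]
    exact grp_c3 rxy ry c3
  obtain ⟨p, q, e1, e2⟩ := word _ _ _ _ _ c3'
  obtain ⟨p', q', e3, e4⟩ := word m (2 * k) ℓ 0 k (by simpa using c1)
  obtain ⟨p'', q'', e5, e6⟩ := word m (2 * k) ℓ (-m) a (by
    rw [zpow_neg, zpow_natCast, zpow_natCast, inv_mul_eq_one]; exact c2)
  rw [hk2, ha2] at e1 e3 e5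
  have hm' : (0 : ℤ) < m := by exact_mod_cast hm
  have hk' : (2 : ℤ) ≤ k := by exact_mod_cast hk
  have haz : (ℓ : ℤ) + m = 2 * a := by exact_mod_cast ha
  have hlz : (ℓ : ℤ) < 2 * k := by omega
  have hl0 : (0 : ℤ) ≤ ℓ := by positivity
  have q0 : q = 0 := by
    rcases mul_eq_zero.1 e2.symm with h | h
    · exact h
    · omega
  subst q0
  have el : (ℓ : ℤ) = p * k := by linarith
  have hp0 : 0 ≤ p := by
    by_contra hneg
    have : p ≤ -1 := by omega
    nlinarith
  have hp2 : p < 2 := by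
    by_contra hneg
    have : 2 ≤ p := by omega
    nlinarith
  have hpc : p = 0 ∨ p = 1 := by omega
  rcases hpc with rfl | rfl
  · exfalso
    have h1 : (m : ℤ) = 2 * (q'' * m) := by rw [← e6]; linarith
    have h2 : (m : ℤ) * (1 - 2 * q'') = 0 := by linarith
    rcases mul_eq_zero.1 h2 with h | h <;> omega
  · have hlk : ℓ = k := by
      have : (ℓ : ℤ) = k := by linarith
      exact_mod_cast this
    refine ⟨hlk, ?_⟩
    have h1 : (m : ℤ) * (q' + 1 - 2 * q'') = 0 := by
      have : (k : ℤ) + m = 2 * a := by rw [← haz, el]; ring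
      rw [e4, e6] at this
      linarith
    have h2 : q' + 1 - 2 * q'' = 0 := by
      rcases mul_eq_zero.1 h1 with h | h
      · omega
      · exact h
    have h3 : (m : ℤ) * (p'' * q' - q'' * q'' + 1) = 0 := by
      have h := e5
      rw [e4, e6] at h
      linarith
    have h4 : p'' * q' - q'' * q'' + 1 = 0 := by
      rcases mul_eq_zero.1 h3 with h | h
      · omega
      · exact h
    have h5 : q' ∣ 3 := ⟨q' + 2 - 4 * p'', by
      have hq : q' = 2 * q'' - 1 := by linarith
      have h6 : p'' * q' = q'' * q'' - 1 := by linarith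
      have : q' * (q' + 2 - 4 * p'') = q' * q' + 2 * q' - 4 * (p'' * q') := by ring
      rw [this, h6, hq]; ring⟩
    have hq0 : 0 < q' := by
      by_contra hneg
      have : q' ≤ 0 := by omega
      nlinarith
    have hq3 : q' ≤ 3 := Int.le_of_dvd (by norm_num) h5
    have hlq : (ℓ : ℤ) = q' * m := by rw [← e4, el]; ring
    interval_cases q'
    · left; omega
    · omega
    · right; omega

lemma perm3 (P : Subgroup (Equiv.Perm (Fin 3))) (h1 : Equiv.swap 1 2 ∈ P)
    (h2 : Equiv.swap 0 1 ∈ P) : P = ⊤ := by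
  have key : ∀ σ : Equiv.Perm (Fin 3), σ = 1 ∨ σ = Equiv.swap 1 2 ∨ σ = Equiv.swap 0 1 ∨
      σ = Equiv.swap 1 2 * Equiv.swap 0 1 ∨ σ = Equiv.swap 0 1 * Equiv.swap 1 2 ∨
      σ = Equiv.swap 0 1 * Equiv.swap 1 2 * Equiv.swap 0 1 := by decide
  rw [eq_top_iff]
  intro σ _
  rcases key σ with h | h | h | h | h | h <;> rw [h]
  · exact P.one_mem
  · exact h1
  · exact h2
  · exact P.mul_mem h1 h2
  · exact P.mul_mem h2 h1
  · exact P.mul_mem (P.mul_mem h2 h1) h2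

lemma backward (m k a ℓ : ℕ) (hm : 0 < m) (hk : 2 ≤ k) (ha : ℓ + m = 2 * a)
    (hc : (k = m ∧ a = m) ∨ (k = 3 * m ∧ a = 2 * m)) :
    Nonempty (autFixing (G m (2 * k) ℓ) (S m (2 * k) ℓ) ≃* Equiv.Perm (Fin 3)) := by
  have hk2 : 2 * k / 2 = k := by omega
  have ha2 : (ℓ + m) / 2 = a := by omega
  obtain ⟨t, ht⟩ : ∃ t, t = gent m (2 * k) ℓ := ⟨_, rfl⟩
  obtain ⟨x, hx⟩ : ∃ x, x = genx m (2 * k) ℓ := ⟨_, rfl⟩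
  obtain ⟨y, hy⟩ : ∃ y, y = geny m (2 * k) ℓ := ⟨_, rfl⟩
  have rt : t * t = 1 := by rw [ht]; exact rel_t _ _ _
  have rxy : Commute x y := by rw [hx, hy]; exact rel_xy _ _ _
  have rtx : t * x = x⁻¹ * t := by rw [ht, hx]; exact rel_tx _ _ _
  have rty : t * y = y⁻¹ * t := by rw [ht, hy]; exact rel_ty _ _ _
  have rx : x ^ k = 1 := by have := rel_x m (2 * k) ℓ; rwa [hk2, ← hx] at this
  have ry : y ^ m = x ^ a := by have := rel_y m (2 * k) ℓ; rwa [ha2, ← hx, ← hy] at this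
  have r1 : y ^ k = 1 := by
    exact grp_r1 rx ry hc
  have r2 : x ^ m = y ^ a := by
    exact grp_r2 rx ry hc
  have r3 : (x⁻¹ * y) ^ m = x⁻¹ ^ a := by
    exact grp_r3 rxy rx ry hc
  -- distinctness
  have d1 : x ≠ 1 := by
    intro h
    obtain ⟨p, q, e1, e2⟩ := word m (2 * k) ℓ 1 0 (by rw [← hx, h]; simp)
    rw [hk2, ha2] at e1
    have q0 : q = 0 := by
      rcases mul_eq_zero.1 e2.symm with h | h
      · exact h
      · omega
    subst q0
    have : (k : ℤ) ∣ 1 := ⟨p, by linarith⟩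
    have := Int.le_of_dvd one_pos this
    omega
  have aux : ∀ i : ℤ, (i = 0 ∨ i = -1) → x ^ i * y ^ (1 : ℤ) ≠ 1 := by
    intro i hi h
    rw [hx, hy] at h
    obtain ⟨p, q, e1, e2⟩ := word m (2 * k) ℓ i 1 h
    rw [hk2, ha2] at e1
    have hmd : (m : ℤ) ∣ 1 := ⟨q, by linarith⟩
    have hm1 : m = 1 := by
      have := Int.le_of_dvd one_pos hmd
      omega
    subst hm1
    rcases hc with ⟨h1, h2⟩ | ⟨h1, h2⟩
    · omega
    · subst h1 h2
      push_cast at e1 e2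
      omega
  have d2 : y ≠ 1 := by
    intro h
    exact aux 0 (Or.inl rfl) (by rw [h]; simp)
  have d3 : x ≠ y := by
    intro h
    exact aux (-1) (Or.inr rfl) (by rw [h]; simp)
  have hSdef : S m (2 * k) ℓ = {t, t * x, t * y} := by rw [ht, hx, hy]; rfl
  -- the two automorphisms
  obtain ⟨f, f1, f2, f3⟩ := exists_hom m (2 * k) ℓ t y x rt (by rw [hk2]; exact r1)
    (by rw [ha2]; exact r2) rty rtx rxy.symm
  obtain ⟨g, g1, g2, g3⟩ := exists_hom m (2 * k) ℓ (t * x) x⁻¹ (x⁻¹ * y)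
    (by nth_rewrite 2 [rtx]; rw [← mul_assoc, mul_inv_cancel_right, rt])
    (by rw [hk2, inv_pow, rx, inv_one])
    (by rw [ha2]; exact r3)
    (by rw [mul_inv_cancel_right, inv_inv, rtx, mul_inv_cancel_left])
    (by rw [mul_assoc, mul_inv_cancel_left, rtx, rty, mul_inv_rev, inv_inv, mul_assoc,
          mul_inv_cancel_left])
    (by rw [mul_assoc, ← rxy.inv_left.eq])
  rw [← ht] at f1 g1
  rw [← hx] at f2 g2
  rw [← hy] at f3 g3
  obtain ⟨α, hα⟩ := exists_aut m (2 * k) ℓ f (by rw [← ht, f1, f1]) (by rw [← hx, f2, f3])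
    (by rw [← hy, f3, f2]) (by
      rw [hSdef]
      rintro s (rfl | rfl | rfl)
      · simp [f1]
      · simp [f1, f2]
      · simp [f1, f3])
  obtain ⟨β, hβ⟩ := exists_aut m (2 * k) ℓ g (by rw [← ht, g1, map_mul, g1, g2]; simp)
    (by rw [← hx, g2, map_inv, g2]; simp)
    (by rw [← hy, g3, map_mul, map_inv, g2, g3]; simp) (by
      rw [hSdef]
      rintro s (rfl | rfl | rfl)
      · simp [g1]
      · simp [g1, g2]
      · simp [g1, g3, mul_assoc])
  -- identify with Fin 3
  let s : Fin 3 → S m (2 * k) ℓ :=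
    ![⟨t, by simp [hSdef]⟩, ⟨t * x, by simp [hSdef]⟩, ⟨t * y, by simp [hSdef]⟩]
  have s0 : ((s 0 : S m (2 * k) ℓ) : G m (2 * k) ℓ) = t := rfl
  have s1 : ((s 1 : S m (2 * k) ℓ) : G m (2 * k) ℓ) = t * x := rfl
  have s2 : ((s 2 : S m (2 * k) ℓ) : G m (2 * k) ℓ) = t * y := rfl
  have hs : Function.Bijective s := by
    constructor
    · intro i j hij
      have hij' := congrArg Subtype.val hij
      fin_cases i <;> fin_cases j <;>
        simp_all [s0, s1, s2]
    · rintro ⟨z, hz⟩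
      have hz' := hz
      rw [hSdef] at hz'
      rcases hz' with h | h | h
      · exact ⟨0, Subtype.ext (s0.trans h.symm)⟩
      · exact ⟨1, Subtype.ext (s1.trans h.symm)⟩
      · exact ⟨2, Subtype.ext (s2.trans h.symm)⟩
  let E : Fin 3 ≃ S m (2 * k) ℓ := Equiv.ofBijective s hs
  let Φ : autFixing (G m (2 * k) ℓ) (S m (2 * k) ℓ) →* Equiv.Perm (Fin 3) :=
    (E.symm.permCongrHom.toMonoidHom).comp (act _ _)
  have hΦ : ∀ φ i j, φ.1 (s i).1 = (s j).1 → Φ φ i = j := by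
    intro φ i j h
    show E.symm (act _ _ φ (E i)) = j
    rw [Equiv.symm_apply_eq]
    exact Subtype.ext h
  have hΦi : Function.Injective Φ :=
    (E.symm.permCongrHom.injective).comp (act_injective _ _ _)
  have hr : Φ.range = ⊤ := by
    apply perm3
    · refine ⟨α, ?_⟩
      ext i
      fin_cases i
      · rw [hΦ α _ 0 (by rw [hα]; exact f1)]; rfl
      · rw [hΦ α _ 2 (by rw [hα]; simp [s1, s2, f1, f2])]; rfl
      · rw [hΦ α _ 1 (by rw [hα]; simp [s1, s2, f1, f3])]; rfl
    · refine ⟨β, ?_⟩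
      ext i
      fin_cases i
      · rw [hΦ β _ 1 (by rw [hβ]; exact g1)]; rfl
      · rw [hΦ β _ 0 (by rw [hβ]; simp [s0, s1, g1, g2])]; rfl
      · rw [hΦ β _ 2 (by rw [hβ]; simp [s2, g1, g3, mul_assoc])]; rfl
  exact ⟨MulEquiv.ofBijective Φ ⟨hΦi, MonoidHom.range_eq_top.1 hr⟩⟩

/-- **Corollary 4.5.** `Aut(G; {t,tx,ty}) ≅ S₃` iff `n = 2ℓ` and either `ℓ = m` or
`ℓ = 3m`. -/
theorem statement11 (m n ℓ : ℕ) (hm : 0 < m) (hn : 4 ≤ n) (hne : Even n)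
    (hl : ℓ ≤ n - 1) (hpar : ℓ % 2 = m % 2) :
    Nonempty (autFixing (G m n ℓ) (S m n ℓ) ≃* Equiv.Perm (Fin 3)) ↔
      (n = 2 * ℓ ∧ (ℓ = m ∨ ℓ = 3 * m)) := by
  obtain ⟨k, hk⟩ := hne
  obtain rfl : n = 2 * k := by omega
  obtain ⟨a, ha⟩ : ∃ a, ℓ + m = 2 * a := ⟨(ℓ + m) / 2, by omega⟩
  constructor
  · rintro ⟨e⟩
    obtain ⟨h1, h2⟩ := forward m k a ℓ hm (by omega) ha hl e
    exact ⟨by omega, h2⟩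
  · rintro ⟨h1, h2⟩
    exact backward m k a ℓ hm (by omega) ha (by omega)

end HTGPaper
end

section
/- Let m and n be positive integers with n ≥ 4 even, let 0 ≤ ℓ ≤ n−1 be an integer of the same parity as m, and let Γ = HTG(m,n,ℓ) with edge color classes R, B, Gr. If α is an automorphism of Γ such that there is no edge e of Γ for which e and α(e) have the same color, then α is color permuting. -/
namespace HTGPaper

/-- If `f` sends every edge coloured `s` to an edge of colour `s'`, the class of `s` is sent
onto the class of `s'`. -/
theorem image_class {H : Type*} [Group H] (f : H → H) (hs : Function.Surjective f) (s s' : H)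
    (h : ∀ g, f (g * s) = f g * s') :
    Sym2.map f '' {e | ∃ g : H, e = s(g, g * s)} = {e | ∃ g : H, e = s(g, g * s')} := by
  ext e
  constructor
  · rintro ⟨_, ⟨g, rfl⟩, rfl⟩
    exact ⟨f g, by simp [h]⟩
  · rintro ⟨g, rfl⟩
    obtain ⟨k, rfl⟩ := hs g
    exact ⟨_, ⟨k, rfl⟩, by simp [h]⟩

/-- One cyclic pattern at a vertex propagates along an edge. -/
theorem pattern_step {H : Type*} [Group H] (a b c : H) (hac : a ≠ c)
    (hab : a ≠ b) (hbc : b ≠ c)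
    (ha : a * a = 1) (hb : b * b = 1) (hc : c * c = 1)
    (f : H → H)
    (h : ∀ g, (f (g * a) = f g * b ∧ f (g * b) = f g * c ∧ f (g * c) = f g * a) ∨
      (f (g * a) = f g * c ∧ f (g * c) = f g * b ∧ f (g * b) = f g * a))
    (g s : H) (hs : s ∈ ({a, b, c} : Set H))
    (hg : f (g * a) = f g * b ∧ f (g * b) = f g * c ∧ f (g * c) = f g * a) :
    f (g * s * a) = f (g * s) * b ∧ f (g * s * b) = f (g * s) * c ∧
      f (g * s * c) = f (g * s) * a := by
  obtain ⟨h1, h2, h3⟩ := hg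
  rcases h (g * s) with h' | ⟨k1, k2, k3⟩
  · exact h'
  · exfalso
    rcases hs with rfl | rfl | rfl
    · rw [mul_assoc, ha, mul_one, h1, mul_assoc, left_eq_mul] at k1
      exact hbc (mul_left_cancel (hb.trans k1.symm))
    · rw [mul_assoc, hb, mul_one, h2, mul_assoc, left_eq_mul] at k3
      exact hac (mul_left_cancel (k3.trans hc.symm))
    · rw [mul_assoc, hc, mul_one, h3, mul_assoc, left_eq_mul] at k2
      exact hab (mul_left_cancel (ha.trans k2.symm))

/-- A pattern valid at one vertex and propagating along edges is valid everywhere. -/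
theorem propagate {H : Type*} [Group H] (T : Set H) (hT : ∀ s ∈ T, s * s = 1)
    (hgen : Subgroup.closure T = ⊤) (P : H → Prop) (h1 : P 1)
    (hstep : ∀ g, ∀ s ∈ T, P g → P (g * s)) (g : H) : P g := by
  have hg : g ∈ Subgroup.closure T := by rw [hgen]; trivial
  induction hg using Subgroup.closure_induction_right with
  | one => exact h1
  | mul_right x hx y hy ih => exact hstep _ _ hy ih
  | mul_inv_cancel x hx y hy ih =>
    rw [← eq_inv_of_mul_eq_one_left (hT y hy)]
    exact hstep _ _ hy ih

theorem abstract_colors {H : Type*} [Group H] (a b c : H)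
    (ha : a * a = 1) (hb : b * b = 1) (hc : c * c = 1)
    (hgen : Subgroup.closure ({a, b, c} : Set H) = ⊤)
    (f : H → H) (hinj : Function.Injective f)
    (hT : ∀ g, ∀ s ∈ ({a, b, c} : Set H), ∃ s' ∈ ({a, b, c} : Set H), f (g * s) = f g * s')
    (hF : ∀ g, ∀ s ∈ ({a, b, c} : Set H), f (g * s) ≠ f g * s) :
    ∀ s ∈ ({a, b, c} : Set H), ∃ s' ∈ ({a, b, c} : Set H), ∀ g, f (g * s) = f g * s' := by
  have hinv : ∀ s ∈ ({a, b, c} : Set H), s * s = 1 := by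
    rintro s (rfl | rfl | rfl) <;> assumption
  -- if only two colors are available, colors are swapped
  have two : ∀ u v : H, ({a, b, c} : Set H) = {u, v} →
      ∀ s ∈ ({a, b, c} : Set H), ∃ s' ∈ ({a, b, c} : Set H), ∀ g, f (g * s) = f g * s' := by
    intro u v huv
    rw [huv] at hT hF ⊢
    rintro s (rfl | rfl)
    · refine ⟨v, by simp, fun g => ?_⟩
      obtain ⟨s', (rfl | rfl), h⟩ := hT g s (by simp)
      · exact absurd h (hF g _ (by simp))
      · exact h
    · refine ⟨u, by simp, fun g => ?_⟩
      obtain ⟨s', (rfl | rfl), h⟩ := hT g s (by simp)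
      · exact h
      · exact absurd h (hF g _ (by simp))
  by_cases hab : a = b
  · exact two a c (by subst hab; simp)
  by_cases hac : a = c
  · exact two a b (by subst hac; ext; simp; tauto)
  by_cases hbc : b = c
  · exact two a b (by subst hbc; simp)
  have key : ∀ g, (f (g * a) = f g * b ∧ f (g * b) = f g * c ∧ f (g * c) = f g * a) ∨
      (f (g * a) = f g * c ∧ f (g * c) = f g * b ∧ f (g * b) = f g * a) := by
    intro g
    have n1 : f (g * a) ≠ f (g * b) := fun h => hab (mul_left_cancel (hinj h))
    have n2 : f (g * a) ≠ f (g * c) := fun h => hac (mul_left_cancel (hinj h))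
    have n3 : f (g * b) ≠ f (g * c) := fun h => hbc (mul_left_cancel (hinj h))
    have fa := hF g a (by simp)
    have fb := hF g b (by simp)
    have fc := hF g c (by simp)
    have ta := hT g a (by simp)
    have tb := hT g b (by simp)
    have tc := hT g c (by simp)
    simp only [Set.mem_insert_iff, Set.mem_singleton_iff, exists_eq_or_imp, exists_eq_left]
      at ta tb tc
    grind
  rcases key 1 with h1 | h1
  · have hP := propagate {a, b, c} hinv hgen
      (fun g => f (g * a) = f g * b ∧ f (g * b) = f g * c ∧ f (g * c) = f g * a) h1
      (fun g s hs hg => pattern_step a b c hac hab hbc ha hb hc f key g s hs hg)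
    rintro s (rfl | rfl | rfl)
    · exact ⟨b, by simp, fun g => (hP g).1⟩
    · exact ⟨c, by simp, fun g => (hP g).2.1⟩
    · exact ⟨a, by simp, fun g => (hP g).2.2⟩
  · have hP := propagate {a, b, c} hinv hgen
      (fun g => f (g * a) = f g * c ∧ f (g * c) = f g * b ∧ f (g * b) = f g * a) h1
      (fun g s hs hg => pattern_step a c b hab hac (Ne.symm hbc) ha hc hb f
        (fun g => (key g).symm) g s (by simp at hs ⊢; tauto) hg)
    rintro s (rfl | rfl | rfl)
    · exact ⟨c, by simp, fun g => (hP g).1⟩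
    · exact ⟨a, by simp, fun g => (hP g).2.2⟩
    · exact ⟨b, by simp, fun g => (hP g).2.1⟩

section
variable (m n ℓ : ℕ)

theorem gent_sq : gent m n ℓ * gent m n ℓ = 1 := by
  have h := PresentedGroup.one_of_mem (rels := rels m n ℓ)
    (x := FreeGroup.of Gen.t ^ 2) (by simp [rels])
  rw [map_pow, pow_two] at h
  exact h

theorem gentx_sq : (gent m n ℓ * genx m n ℓ) * (gent m n ℓ * genx m n ℓ) = 1 := by
  have h := PresentedGroup.one_of_mem (rels := rels m n ℓ)
    (x := FreeGroup.of Gen.t * FreeGroup.of Gen.x * (FreeGroup.of Gen.t)⁻¹ * FreeGroup.of Gen.x)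
    (by simp [rels])
  simp only [map_mul, map_inv] at h
  have h' : gent m n ℓ * genx m n ℓ * (gent m n ℓ)⁻¹ * genx m n ℓ = 1 := h
  rw [← eq_inv_of_mul_eq_one_left (gent_sq m n ℓ)] at h'
  rw [← mul_assoc]
  exact h'

theorem genty_sq : (gent m n ℓ * geny m n ℓ) * (gent m n ℓ * geny m n ℓ) = 1 := by
  have h := PresentedGroup.one_of_mem (rels := rels m n ℓ)
    (x := FreeGroup.of Gen.t * FreeGroup.of Gen.y * (FreeGroup.of Gen.t)⁻¹ * FreeGroup.of Gen.y)
    (by simp [rels])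
  simp only [map_mul, map_inv] at h
  have h' : gent m n ℓ * geny m n ℓ * (gent m n ℓ)⁻¹ * geny m n ℓ = 1 := h
  rw [← eq_inv_of_mul_eq_one_left (gent_sq m n ℓ)] at h'
  rw [← mul_assoc]
  exact h'

theorem gen_closure : Subgroup.closure (S m n ℓ) = ⊤ := by
  rw [eq_top_iff, ← PresentedGroup.closure_range_of (rels m n ℓ), Subgroup.closure_le]
  have ht : gent m n ℓ ∈ Subgroup.closure (S m n ℓ) := Subgroup.subset_closure (by simp [S])
  rintro _ ⟨i, rfl⟩
  cases i
  · exact ht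
  · exact (Subgroup.mul_mem_cancel_left _ ht).1 (Subgroup.subset_closure (by simp [S]) :
      gent m n ℓ * genx m n ℓ ∈ Subgroup.closure (S m n ℓ))
  · exact (Subgroup.mul_mem_cancel_left _ ht).1 (Subgroup.subset_closure (by simp [S]) :
      gent m n ℓ * geny m n ℓ ∈ Subgroup.closure (S m n ℓ))

/-- The parity of the number of occurrences of `t`. -/
def sgnGen : Gen → ℤˣ
  | Gen.t => -1
  | _ => 1

theorem sgn_rels : ∀ r ∈ rels m n ℓ, FreeGroup.lift sgnGen r = 1 := by
  rintro r (rfl | rfl | rfl | rfl | rfl | rfl) <;> simp [sgnGen]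

theorem ne_one_of_mem_S (s : G m n ℓ) (hs : s ∈ S m n ℓ) : s ≠ 1 := by
  have key : PresentedGroup.toGroup (sgn_rels m n ℓ) s = -1 := by
    rcases hs with rfl | rfl | rfl <;> simp [gent, genx, geny, sgnGen]
  rintro rfl
  rw [map_one] at key
  exact absurd key (by decide)

end

theorem statement13 (m n ℓ : ℕ) (hm : 0 < m) (hn : 4 ≤ n) (hne : Even n)
    (hl : ℓ ≤ n - 1) (hpar : ℓ % 2 = m % 2)
    (α : cayley (G m n ℓ) (S m n ℓ) ≃g cayley (G m n ℓ) (S m n ℓ))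
    (hα : ∀ C ∈ colorClasses m n ℓ, ∀ e ∈ C, Sym2.map ⇑α e ∉ C) :
    IsColorPermuting α := by
  have hinv : ∀ s ∈ S m n ℓ, s * s = 1 := by
    rintro s (rfl | rfl | rfl)
    exacts [gent_sq m n ℓ, gentx_sq m n ℓ, genty_sq m n ℓ]
  have hcls : ∀ s ∈ S m n ℓ, {e | ∃ g : G m n ℓ, e = s(g, g * s)} ∈ colorClasses m n ℓ := by
    rintro s (rfl | rfl | rfl)
    · exact Or.inl rfl
    · exact Or.inr (Or.inl rfl)
    · exact Or.inr (Or.inr rfl)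
  have main := abstract_colors _ _ _ (gent_sq m n ℓ) (gentx_sq m n ℓ) (genty_sq m n ℓ)
    (gen_closure m n ℓ) α α.injective
    (by
      intro g s hs
      have hadj : (cayley (G m n ℓ) (S m n ℓ)).Adj g (g * s) := by
        refine (SimpleGraph.fromRel_adj _ _ _).2 ⟨?_, Or.inl ⟨s, hs, rfl⟩⟩
        intro h
        exact ne_one_of_mem_S m n ℓ s hs (left_eq_mul.1 h)
      have h2 := (SimpleGraph.fromRel_adj _ _ _).1 (α.map_adj_iff.2 hadj)
      rcases h2.2 with ⟨s', hs', h⟩ | ⟨s', hs', h⟩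
      · exact ⟨s', hs', h⟩
      · exact ⟨s', hs', by rw [h, mul_assoc, hinv s' hs', mul_one]⟩)
    (by
      intro g s hs h
      exact hα _ (hcls s hs) s(g, g * s) ⟨g, rfl⟩ ⟨α g, by simp [h]⟩)
  have fin : ∀ s ∈ S m n ℓ,
      Sym2.map ⇑α '' {e | ∃ g : G m n ℓ, e = s(g, g * s)} ∈ colorClasses m n ℓ := by
    intro s hs
    obtain ⟨s', hs', h⟩ := main s hs
    rw [image_class α α.surjective s s' h]
    exact hcls s' hs'
  rintro C (rfl | rfl | rfl)
  · exact fin _ (Or.inl rfl)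
  · exact fin _ (Or.inr (Or.inl rfl))
  · exact fin _ (Or.inr (Or.inr rfl))

end HTGPaper
end
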